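/- Fix t > 0 and set r' = 1/√(1+t). The function f(K) = η_K(t)·exp(−2K·μ(r')) is strictly increasing on [1, ∞); moreover f(1) = t·exp(−2μ(r')), f(K) < 1/16 for all K ≥ 1, and f(K) → 1/16 as K → ∞, so f maps [1, ∞) onto [t·exp(−2μ(r')), 1/16). -/

import Mathlib

open Set Filter

/-- Complete elliptic integral of the first kind. -/
noncomputable def ellK (r : ℝ) : ℝ :=
  ∫ θ in (0:ℝ)..(Real.pi / 2), (1 - r ^ 2 * Real.sin θ ^ 2) ^ (-(1/2) : ℝ)

/-- The Grötzsch modulus μ(r) = (π/2)·𝒦'(r)/𝒦(r). -/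
noncomputable def mu (r : ℝ) : ℝ :=
  Real.pi / 2 * ellK (Real.sqrt (1 - r ^ 2)) / ellK r

noncomputable def FI (p m : ℝ) : ℝ := ∫ θ in (0:ℝ)..(Real.pi / 2), (1 - m * Real.sin θ ^ 2) ^ p

lemma base_pos {m : ℝ} (hm : m < 1) (θ : ℝ) : 0 < 1 - m * Real.sin θ ^ 2 := by
  have h1 := Real.sin_sq_le_one θ
  have h2 := sq_nonneg (Real.sin θ)
  nlinarith [mul_nonneg (sub_nonneg.2 hm.le) h2]

lemma cont_int {m : ℝ} (hm : m < 1) (p : ℝ) :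
    Continuous fun θ : ℝ => (1 - m * Real.sin θ ^ 2) ^ p := by
  refine Continuous.rpow_const (by fun_prop) fun θ => Or.inl (base_pos hm θ).ne'

lemma FI_hasDerivAt {p m : ℝ} (hp : p ≤ 1) (h0 : 0 ≤ m) (h1 : m < 1) :
    HasDerivAt (FI p) (∫ θ in (0:ℝ)..(Real.pi / 2),
      (-(p * Real.sin θ ^ 2)) * (1 - m * Real.sin θ ^ 2) ^ (p - 1)) m := by
  set c := (1 + m) / 2 with hc
  have hc1 : c < 1 := by rw [hc]; linarith
  have hmc : m < c := by rw [hc]; linarith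
  refine (intervalIntegral.hasDerivAt_integral_of_dominated_loc_of_deriv_le
    (s := Set.Iio c) (μ := MeasureTheory.volume) (a := 0) (b := Real.pi / 2) (F := fun m θ => (1 - m * Real.sin θ ^ 2) ^ p)
    (F' := fun m θ => (-(p * Real.sin θ ^ 2)) * (1 - m * Real.sin θ ^ 2) ^ (p - 1))
    (bound := fun _ => |p| * (1 - c) ^ (p - 1)) (Iio_mem_nhds hmc) ?_ ?_ ?_ ?_ ?_ ?_).2
  · filter_upwards [Iio_mem_nhds h1] with x hx
    exact (cont_int hx p).aestronglyMeasurable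
  · exact (cont_int h1 p).intervalIntegrable _ _
  · exact (Continuous.mul (by fun_prop) (cont_int h1 (p-1))).aestronglyMeasurable
  · refine Filter.Eventually.of_forall fun θ _ x hx => ?_
    have hx' : x < c := hx
    have hb := base_pos (hx'.trans hc1) θ
    have hs := Real.sin_sq_le_one θ
    have hs0 := sq_nonneg (Real.sin θ)
    have hle : 1 - c ≤ 1 - x * Real.sin θ ^ 2 := by
      have : x * Real.sin θ ^ 2 ≤ c * Real.sin θ ^ 2 := by gcongr
      nlinarith
    rw [norm_mul, Real.norm_eq_abs, Real.norm_eq_abs, abs_neg, abs_mul, abs_of_nonneg hs0,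
      abs_of_pos (Real.rpow_pos_of_pos hb _)]
    have h3 := Real.rpow_le_rpow_of_nonpos (by linarith) hle (by linarith : p - 1 ≤ 0)
    have h4 : |p| * Real.sin θ ^ 2 ≤ |p| := mul_le_of_le_one_right (abs_nonneg _) hs
    exact mul_le_mul h4 h3 (Real.rpow_pos_of_pos hb _).le (abs_nonneg _)
  · exact intervalIntegrable_const
  · refine Filter.Eventually.of_forall fun θ _ x hx => ?_
    have hx' : x < c := hx
    have hb := base_pos (hx'.trans hc1) θ
    have h : HasDerivAt (fun x : ℝ => 1 - x * Real.sin θ ^ 2) (-(1 * Real.sin θ ^ 2)) x :=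
      ((hasDerivAt_id x).mul_const _).const_sub 1
    refine HasDerivAt.congr_deriv (h.rpow_const (p := p) (Or.inl hb.ne')) ?_
    ring

lemma rp {b : ℝ} (hb : 0 < b) :
    b ^ (1/2 - 1 : ℝ) = b ^ (1/2:ℝ) / b ∧ b ^ (-(1/2) : ℝ) = b ^ (1/2:ℝ) / b ∧
    b ^ (-(1/2) - 1 : ℝ) = b ^ (1/2:ℝ) / b ^ 2 := by
  refine ⟨?_, ?_, ?_⟩
  · rw [Real.rpow_sub hb, Real.rpow_one]
  · rw [show (-(1/2) : ℝ) = 1/2 - 1 by norm_num, Real.rpow_sub hb, Real.rpow_one]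
  · rw [show (-(1/2) - 1 : ℝ) = 1/2 - (2:ℕ) by norm_num, Real.rpow_sub hb, Real.rpow_natCast]

noncomputable def eE (m : ℝ) := FI (1/2) m
noncomputable def eK (m : ℝ) := FI (-(1/2)) m

lemma eE_deriv {m : ℝ} (h0 : 0 < m) (h1 : m < 1) :
    HasDerivAt eE ((eE m - eK m) / (2 * m)) m := by
  have h := FI_hasDerivAt (p := 1/2) (by norm_num) h0.le h1
  have : (∫ θ in (0:ℝ)..(Real.pi / 2),
      (-((1/2) * Real.sin θ ^ 2)) * (1 - m * Real.sin θ ^ 2) ^ ((1/2:ℝ) - 1))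
      = (eE m - eK m) / (2 * m) := by
    unfold eE eK FI
    rw [← intervalIntegral.integral_sub ((cont_int h1 _).intervalIntegrable _ _)
      ((cont_int h1 _).intervalIntegrable _ _), ← intervalIntegral.integral_div]
    refine intervalIntegral.integral_congr fun θ _ => ?_
    have hb := base_pos h1 θ
    have hb2 := hb.ne'
    simp only [(rp hb).1, (rp hb).2.1]
    generalize (1 - m * Real.sin θ ^ 2) ^ (1/2:ℝ) = q
    generalize hbb : 1 - m * Real.sin θ ^ 2 = b at *
    have e : Real.sin θ ^ 2 = (1 - b) / m := by rw [← hbb]; field_simp; ring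
    rw [e]
    field_simp
    ring
  rw [this] at h
  exact h

lemma eK_deriv {m : ℝ} (h0 : 0 < m) (h1 : m < 1) :
    HasDerivAt eK ((eE m - (1 - m) * eK m) / (2 * m * (1 - m))) m := by
  have h := FI_hasDerivAt (p := -(1/2)) (by norm_num) h0.le h1
  have h1' : 1 - m ≠ 0 := by linarith
  have hD : ∀ θ : ℝ, HasDerivAt (fun θ => Real.sin θ * Real.cos θ * (1 - m * Real.sin θ ^ 2) ^ (-(1/2):ℝ))
      ((1 - 2 * Real.sin θ ^ 2 + m * Real.sin θ ^ 4) * (1 - m * Real.sin θ ^ 2) ^ (-(1/2) - 1 : ℝ)) θ := by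
    intro θ
    have hb := base_pos h1 θ
    have hb2 := hb.ne'
    have e1 : HasDerivAt (fun x : ℝ => 1 - m * Real.sin x ^ 2) (-(m * (2 * Real.sin θ * Real.cos θ))) θ := by
      have := (((Real.hasDerivAt_sin θ).pow 2).const_mul m).const_sub 1
      simpa using this
    have e2 := e1.rpow_const (p := -(1/2)) (Or.inl hb.ne')
    have e3 := ((Real.hasDerivAt_sin θ).mul (Real.hasDerivAt_cos θ)).mul e2
    refine HasDerivAt.congr_deriv e3 ?_
    simp only [(rp hb).2.1, (rp hb).2.2, Pi.mul_apply]
    symm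
    have hc : Real.cos θ ^ 2 = 1 - Real.sin θ ^ 2 := Real.cos_sq' θ
    generalize (1 - m * Real.sin θ ^ 2) ^ (1/2:ℝ) = q
    field_simp
    ring_nf
    rw [hc]
    ring
  have hI := intervalIntegral.integral_eq_sub_of_hasDerivAt (a := 0) (b := Real.pi/2)
    (fun θ _ => hD θ) ((Continuous.mul (by fun_prop) (cont_int h1 _)).intervalIntegrable _ _)
  have : (∫ θ in (0:ℝ)..(Real.pi / 2),
      (-(-(1/2) * Real.sin θ ^ 2)) * (1 - m * Real.sin θ ^ 2) ^ (-(1/2:ℝ) - 1))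
      = (eE m - (1 - m) * eK m) / (2 * m * (1 - m)) := by
    have hz : ((eE m - (1 - m) * eK m) / (2 * m * (1 - m))) =
      (eE m - (1 - m) * eK m) / (2 * m * (1 - m)) - (1/(2*(1-m))) * (∫ θ in (0:ℝ)..(Real.pi / 2), (1 - 2 * Real.sin θ ^ 2 + m * Real.sin θ ^ 4) * (1 - m * Real.sin θ ^ 2) ^ (-(1/2) - 1 : ℝ)) := by
      rw [hI]; simp
    rw [hz]
    unfold eE eK FI
    rw [← intervalIntegral.integral_const_mul, ← intervalIntegral.integral_const_mul,
      ← intervalIntegral.integral_sub ((cont_int h1 _).intervalIntegrable _ _)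
      (((cont_int h1 _).const_mul _ ).intervalIntegrable _ _), ← intervalIntegral.integral_div,
      ← intervalIntegral.integral_sub]
    · refine intervalIntegral.integral_congr fun θ _ => ?_
      have hb := base_pos h1 θ
      have hb2 := hb.ne'
      simp only [(rp hb).2.2, (rp hb).2.1]
      generalize (1 - m * Real.sin θ ^ 2) ^ (1/2:ℝ) = q
      generalize hbb : 1 - m * Real.sin θ ^ 2 = b at *
      have e : Real.sin θ ^ 2 = (1 - b) / m := by rw [← hbb]; field_simp; ring
      rw [show Real.sin θ ^ 4 = (Real.sin θ ^ 2) ^ 2 by ring, e]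
      field_simp
      ring
    · exact (((cont_int h1 _).sub ((cont_int h1 _).const_mul _ )).div_const _).intervalIntegrable _ _
    · exact (Continuous.const_mul (Continuous.mul (by fun_prop) (cont_int h1 _)) _).intervalIntegrable _ _
  rw [this] at h
  exact h

lemma eE_cont : Continuous eE := by
  unfold eE FI
  refine intervalIntegral.continuous_parametric_intervalIntegral_of_continuous' (f := fun m θ => (1 - m * Real.sin θ ^ 2) ^ (1/2:ℝ)) ?_ _ _
  refine Continuous.rpow_const (by fun_prop) fun θ => Or.inr (by norm_num)

lemma eE_one : eE 1 = 1 := by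
  unfold eE FI
  have : (∫ θ in (0:ℝ)..(Real.pi / 2), (1 - 1 * Real.sin θ ^ 2) ^ (1/2:ℝ)) = ∫ θ in (0:ℝ)..(Real.pi / 2), Real.cos θ := by
    refine intervalIntegral.integral_congr fun θ h => ?_
    rw [Set.uIcc_of_le (by positivity)] at h
    have hc : 0 ≤ Real.cos θ := Real.cos_nonneg_of_mem_Icc ⟨by linarith [h.1, Real.pi_pos], h.2⟩
    simp only [one_mul]
    rw [← Real.cos_sq', ← Real.sqrt_eq_rpow, Real.sqrt_sq hc]
  rw [this]; simp

lemma FI_zero (p : ℝ) : FI p 0 = Real.pi / 2 := by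
  unfold FI; simp

lemma eK_ge {m : ℝ} (h0 : 0 ≤ m) (h1 : m < 1) : Real.pi / 2 ≤ eK m := by
  have : (∫ θ in (0:ℝ)..(Real.pi / 2), (1:ℝ)) ≤ eK m := by
    refine intervalIntegral.integral_mono_on (by positivity) (by simp) ((cont_int h1 _).intervalIntegrable _ _) fun θ _ => ?_
    refine Real.one_le_rpow_of_pos_of_le_one_of_nonpos (base_pos h1 θ) ?_ (by norm_num)
    have := mul_nonneg h0 (sq_nonneg (Real.sin θ)); linarith
  simpa using this

lemma eK_gt {m : ℝ} (h0 : 0 < m) (h1 : m < 1) : Real.pi / 2 < eK m := by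
  have : (∫ θ in (0:ℝ)..(Real.pi / 2), (1:ℝ)) < eK m := by
    refine intervalIntegral.integral_lt_integral_of_continuousOn_of_le_of_exists_lt (by positivity) (by fun_prop) (cont_int h1 _).continuousOn (fun θ _ => ?_) ⟨Real.pi/2, ⟨by positivity, le_rfl⟩, ?_⟩
    · refine Real.one_le_rpow_of_pos_of_le_one_of_nonpos (base_pos h1 θ) ?_ (by norm_num)
      have := mul_nonneg h0.le (sq_nonneg (Real.sin θ)); linarith
    · refine Real.one_lt_rpow_of_pos_of_lt_one_of_neg (base_pos h1 _) ?_ (by norm_num)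
      simp [h0]
  simpa using this

/-- remainder -/
noncomputable def eR (r : ℝ) : ℝ := ∫ θ in (0:ℝ)..(Real.pi / 2),
  Real.sqrt (1 - |r * Real.sin θ|) / Real.sqrt (1 + |r * Real.sin θ|)

lemma eR_cont : Continuous eR := by
  unfold eR
  refine intervalIntegral.continuous_parametric_intervalIntegral_of_continuous' (f := fun r θ => Real.sqrt (1 - |r * Real.sin θ|) / Real.sqrt (1 + |r * Real.sin θ|)) ?_ _ _
  refine Continuous.div (by fun_prop) (by fun_prop) fun x => ?_
  positivity

lemma eR_one : eR 1 = Real.log 2 := by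
  have hI : (∫ θ in (0:ℝ)..(Real.pi / 2), Real.cos θ / (1 + Real.sin θ)) = Real.log (1 + Real.sin (Real.pi/2)) - Real.log (1 + Real.sin 0) := by
    have hp : ∀ θ ∈ Set.uIcc 0 (Real.pi/2), 0 < 1 + Real.sin θ := by
      intro θ h
      rw [Set.uIcc_of_le (by positivity)] at h
      have := Real.sin_nonneg_of_nonneg_of_le_pi h.1 (by linarith [h.2, Real.pi_pos])
      linarith
    refine intervalIntegral.integral_eq_sub_of_hasDerivAt (f := fun θ => Real.log (1 + Real.sin θ)) (fun θ h => ?_) ?_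
    · exact ((Real.hasDerivAt_sin θ).const_add 1).log (hp θ h).ne'
    · exact (ContinuousOn.div (by fun_prop) (by fun_prop) fun θ h => (hp θ h).ne').intervalIntegrable
  have : eR 1 = ∫ θ in (0:ℝ)..(Real.pi / 2), Real.cos θ / (1 + Real.sin θ) := by
    refine intervalIntegral.integral_congr fun θ h => ?_
    rw [Set.uIcc_of_le (by positivity)] at h
    have hc : 0 ≤ Real.cos θ := Real.cos_nonneg_of_mem_Icc ⟨by linarith [h.1, Real.pi_pos], h.2⟩
    have hs := Real.sin_nonneg_of_nonneg_of_le_pi h.1 (by linarith [h.2, Real.pi_pos])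
    have hs1 := Real.sin_le_one θ
    simp only [one_mul, abs_of_nonneg hs]
    have e : Real.cos θ = Real.sqrt (1 - Real.sin θ) * Real.sqrt (1 + Real.sin θ) := by
      rw [← Real.sqrt_mul (by linarith), show (1 - Real.sin θ) * (1 + Real.sin θ) = Real.cos θ ^ 2 by
        rw [Real.cos_sq']; ring, Real.sqrt_sq hc]
    have p2 := Real.sqrt_pos.2 (by linarith : 0 < 1 + Real.sin θ)
    have e2 := Real.mul_self_sqrt (by linarith : 0 ≤ 1 + Real.sin θ)
    rw [e, div_eq_div_iff p2.ne' (by linarith), mul_assoc, e2]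
  rw [this, hI]; norm_num

lemma eK_eq {r : ℝ} (h0 : 0 < r) (h1 : r < 1) :
    eK (r ^ 2) = eR r + (Real.log (1 + r) - Real.log (Real.sqrt (1 - r ^ 2))) := by
  have hm : r ^ 2 < 1 := by nlinarith
  have hI : (∫ θ in (0:ℝ)..(Real.pi / 2), r * Real.sin θ * (1 - r ^ 2 * Real.sin θ ^ 2) ^ (-(1/2) : ℝ))
     = -Real.log (r * Real.cos (Real.pi/2) + Real.sqrt (1 - r ^ 2 * Real.sin (Real.pi/2) ^ 2))
       - -Real.log (r * Real.cos 0 + Real.sqrt (1 - r ^ 2 * Real.sin 0 ^ 2)) := by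
    refine intervalIntegral.integral_eq_sub_of_hasDerivAt (f := fun θ => -Real.log (r * Real.cos θ + Real.sqrt (1 - r ^ 2 * Real.sin θ ^ 2))) (fun θ h => ?_) ?_
    · rw [Set.uIcc_of_le (by positivity)] at h
      have hc : 0 ≤ Real.cos θ := Real.cos_nonneg_of_mem_Icc ⟨by linarith [h.1, Real.pi_pos], h.2⟩
      have hb := base_pos hm θ
      have hq := Real.sqrt_pos.2 hb
      have e1 : HasDerivAt (fun x : ℝ => 1 - r ^ 2 * Real.sin x ^ 2) (-(r ^ 2 * (2 * Real.sin θ * Real.cos θ))) θ := by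
        have := (((Real.hasDerivAt_sin θ).pow 2).const_mul (r ^ 2)).const_sub 1
        simpa using this
      have hs : 0 < r * Real.cos θ + Real.sqrt (1 - r ^ 2 * Real.sin θ ^ 2) := by positivity
      have e2 := ((((Real.hasDerivAt_cos θ).const_mul r).add (e1.sqrt hb.ne')).log hs.ne').neg
      refine HasDerivAt.congr_deriv e2 ?_
      symm
      rw [Real.rpow_neg hb.le, ← Real.sqrt_eq_rpow]
      simp only [Pi.add_apply]
      field_simp
      ring
    · exact (Continuous.mul (by fun_prop) (cont_int hm _)).intervalIntegrable _ _
  have h2 : eK (r ^ 2) = eR r + (∫ θ in (0:ℝ)..(Real.pi / 2), r * Real.sin θ * (1 - r ^ 2 * Real.sin θ ^ 2) ^ (-(1/2) : ℝ)) := by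
    have : eR r = ∫ θ in (0:ℝ)..(Real.pi / 2), (1 - r * Real.sin θ) * (1 - r ^ 2 * Real.sin θ ^ 2) ^ (-(1/2) : ℝ) := by
      refine intervalIntegral.integral_congr fun θ h => ?_
      rw [Set.uIcc_of_le (by positivity)] at h
      have hs := Real.sin_nonneg_of_nonneg_of_le_pi h.1 (by linarith [h.2, Real.pi_pos])
      have hs1 := Real.sin_le_one θ
      have hb := base_pos hm θ
      have ha : 0 ≤ r * Real.sin θ := by positivity
      have ha1 : r * Real.sin θ < 1 := by nlinarith
      simp only [abs_of_nonneg ha]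
      rw [Real.rpow_neg hb.le, ← Real.sqrt_eq_rpow, show 1 - r ^ 2 * Real.sin θ ^ 2 = (1 - r * Real.sin θ) * (1 + r * Real.sin θ) by ring, Real.sqrt_mul (by linarith)]
      have e := Real.mul_self_sqrt (by linarith : 0 ≤ 1 - r * Real.sin θ)
      have p1 := Real.sqrt_pos.2 (by linarith : 0 < 1 - r * Real.sin θ)
      have p2 := Real.sqrt_pos.2 (by linarith : 0 < 1 + r * Real.sin θ)
      nth_rewrite 2 [← e]
      field_simp
    rw [this, ← intervalIntegral.integral_add]
    · refine intervalIntegral.integral_congr fun θ h => ?_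
      ring
    · exact (Continuous.mul (by fun_prop) (cont_int hm _)).intervalIntegrable _ _
    · exact (Continuous.mul (by fun_prop) (cont_int hm _)).intervalIntegrable _ _
  rw [h2, hI]
  simp
  ring_nf

open Topology in
lemma eG_tendsto : Tendsto (fun m : ℝ => eR (Real.sqrt (1 - m)) + Real.log (1 + Real.sqrt (1 - m)))
    (𝓝[>] 0) (𝓝 (2 * Real.log 2)) := by
  have hc : ContinuousAt (fun m : ℝ => eR (Real.sqrt (1 - m)) + Real.log (1 + Real.sqrt (1 - m))) 0 := by
    refine ContinuousAt.add (eR_cont.comp (by fun_prop : Continuous fun m : ℝ => Real.sqrt (1 - m))).continuousAt ?_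
    refine ContinuousAt.log (by fun_prop) (by norm_num)
  have := hc.tendsto.mono_left (nhdsWithin_le_nhds (s := Set.Ioi 0))
  convert this using 2
  simp [eR_one]
  norm_num
  ring

lemma eL_eq {m : ℝ} (h0 : 0 < m) (h1 : m < 1) :
    eK (1 - m) = eR (Real.sqrt (1 - m)) + Real.log (1 + Real.sqrt (1 - m)) - Real.log m / 2 := by
  have hs : Real.sqrt (1 - m) ^ 2 = 1 - m := Real.sq_sqrt (by linarith)
  have h := eK_eq (r := Real.sqrt (1 - m)) (Real.sqrt_pos.2 (by linarith))
    (by rw [Real.sqrt_lt' one_pos]; linarith)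
  rw [hs, show 1 - (1 - m) = m by ring, Real.log_sqrt h0.le] at h
  rw [h]; ring

open Topology in
lemma ev01 : ∀ᶠ m : ℝ in 𝓝[>] 0, 0 < m ∧ m < 1 :=
  Ioo_mem_nhdsGT one_pos

open Topology in
lemma mL_tendsto : Tendsto (fun m : ℝ => m * eK (1 - m)) (𝓝[>] 0) (𝓝 0) := by
  have h0 : Tendsto (fun m : ℝ => m) (𝓝[>] 0) (𝓝 0) := tendsto_id.mono_left nhdsWithin_le_nhds
  have h1 : Tendsto (fun m : ℝ => m * Real.log m) (𝓝[>] 0) (𝓝 0) := by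
    have := (Real.continuous_mul_log.tendsto 0).mono_left (nhdsWithin_le_nhds (s := Set.Ioi 0))
    simpa using this
  have h2 := (h0.mul eG_tendsto).sub (h1.div_const 2)
  simp only [zero_mul, zero_div, sub_zero] at h2
  refine h2.congr' ?_
  filter_upwards [ev01] with m hm
  rw [eL_eq hm.1 hm.2]; ring

open Topology in
lemma diffL_tendsto {F : ℝ → ℝ} (hF : DifferentiableAt ℝ F 0) (h0 : F 0 = 0) :
    Tendsto (fun m : ℝ => F m * eK (1 - m)) (𝓝[>] 0) (𝓝 0) := by
  have h1 := hF.hasDerivAt.tendsto_slope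
  have h2 : Tendsto (slope F 0) (𝓝[>] 0) (𝓝 (deriv F 0)) :=
    h1.mono_left (nhdsWithin_mono _ fun x hx => (ne_of_gt hx))
  have h3 := h2.mul mL_tendsto
  rw [mul_zero] at h3
  refine h3.congr' ?_
  filter_upwards [ev01] with m hm
  have := hm.1.ne'
  simp only [slope, h0, sub_zero, vsub_eq_sub, smul_eq_mul]
  field_simp

lemma eK_diff0 : DifferentiableAt ℝ eK 0 :=
  (FI_hasDerivAt (p := -(1/2)) (by norm_num) le_rfl one_pos).differentiableAt
lemma eE_diff0 : DifferentiableAt ℝ eE 0 :=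
  (FI_hasDerivAt (p := 1/2) (by norm_num) le_rfl one_pos).differentiableAt

open Topology in
lemma eK_tendsto0 : Tendsto eK (𝓝[>] 0) (𝓝 (Real.pi / 2)) := by
  have := eK_diff0.continuousAt.tendsto.mono_left (nhdsWithin_le_nhds (s := Set.Ioi 0))
  rwa [show eK 0 = Real.pi / 2 from FI_zero _] at this

lemma eL_deriv {m : ℝ} (h0 : 0 < m) (h1 : m < 1) :
    HasDerivAt (fun m => eK (1 - m)) (-((eE (1 - m) - m * eK (1 - m)) / (2 * m * (1 - m)))) m := by
  have h := (eK_deriv (m := 1 - m) (by linarith) (by linarith)).comp m ((hasDerivAt_id m).const_sub 1)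
  refine h.congr_deriv ?_
  rw [show 1 - (1 - m) = m by ring]; ring

lemma eE'_deriv {m : ℝ} (h0 : 0 < m) (h1 : m < 1) :
    HasDerivAt (fun m => eE (1 - m)) (-((eE (1 - m) - eK (1 - m)) / (2 * (1 - m)))) m := by
  have h := (eE_deriv (m := 1 - m) (by linarith) (by linarith)).comp m ((hasDerivAt_id m).const_sub 1)
  refine h.congr_deriv ?_
  ring

open Topology in
lemma legendre {m : ℝ} (h0 : 0 < m) (h1 : m < 1) :
    (eE m - eK m) * eK (1 - m) + eE (1 - m) * eK m = Real.pi / 2 := by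
  set Λ : ℝ → ℝ := fun m => (eE m - eK m) * eK (1 - m) + eE (1 - m) * eK m with hΛ
  have hd : ∀ x ∈ Set.Ioo (0:ℝ) 1, HasDerivAt Λ 0 x := by
    intro x hx
    have a := eE_deriv hx.1 hx.2
    have b := eK_deriv hx.1 hx.2
    have c := eL_deriv hx.1 hx.2
    have d := eE'_deriv hx.1 hx.2
    refine (((a.sub b).mul c).add (d.mul b)).congr_deriv ?_
    have e1 := hx.1.ne'
    have e2 : 1 - x ≠ 0 := by linarith [hx.2]
    simp only [Pi.sub_apply]
    field_simp
    ring
  have hconst : ∀ x ∈ Set.Ioo (0:ℝ) 1, Λ x = Λ m := by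
    intro x hx
    exact isOpen_Ioo.is_const_of_deriv_eq_zero isPreconnected_Ioo
      (fun y hy => (hd y hy).differentiableAt.differentiableWithinAt)
      (fun y hy => (hd y hy).deriv) hx ⟨h0, h1⟩
  have hE : Tendsto (fun m : ℝ => eE (1 - m)) (𝓝[>] 0) (𝓝 1) := by
    have hcc : Continuous fun m : ℝ => eE (1 - m) := eE_cont.comp (by fun_prop)
    have := (hcc.tendsto 0).mono_left (nhdsWithin_le_nhds (s := Set.Ioi 0))
    simpa [eE_one] using this
  have hl := (diffL_tendsto (F := fun m => eE m - eK m) (eE_diff0.sub eK_diff0)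
    (by simp [eE, eK, FI_zero])).add (hE.mul eK_tendsto0)
  rw [zero_add, one_mul] at hl
  have hl2 : Tendsto Λ (𝓝[>] 0) (𝓝 (Λ m)) := by
    refine tendsto_const_nhds.congr' ?_
    filter_upwards [ev01] with x hx using (hconst x hx).symm
  exact tendsto_nhds_unique hl2 hl

noncomputable def eM (m : ℝ) : ℝ := Real.pi / 2 * eK (1 - m) / eK m

lemma eK_pos {m : ℝ} (h0 : 0 < m) (h1 : m < 1) : 0 < eK m :=
  lt_trans (by positivity) (eK_gt h0 h1)

lemma eM_pos {m : ℝ} (h0 : 0 < m) (h1 : m < 1) : 0 < eM m := by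
  have := eK_pos h0 h1
  have := eK_pos (m := 1 - m) (by linarith) (by linarith)
  unfold eM; positivity

lemma eM_deriv {m : ℝ} (h0 : 0 < m) (h1 : m < 1) :
    HasDerivAt eM (-(Real.pi ^ 2 / (8 * m * (1 - m) * eK m ^ 2))) m := by
  have hk := eK_pos h0 h1
  have h := ((eL_deriv h0 h1).const_mul (Real.pi / 2)).div (eK_deriv h0 h1) hk.ne'
  refine h.congr_deriv ?_
  have hl := legendre h0 h1
  have e2 : 1 - m ≠ 0 := by linarith
  field_simp
  linear_combination (-8) * hl

lemma eM_anti : StrictAntiOn eM (Set.Ioo 0 1) := by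
  refine strictAntiOn_of_deriv_neg (convex_Ioo 0 1)
    (fun m hm => (eM_deriv hm.1 hm.2).continuousAt.continuousWithinAt) fun m hm => ?_
  rw [interior_Ioo] at hm
  rw [(eM_deriv hm.1 hm.2).deriv]
  have := eK_pos hm.1 hm.2
  have := hm.1
  have : 0 < 1 - m := by linarith [hm.2]
  have := Real.pi_pos
  rw [neg_lt_zero]; positivity

open Topology in
lemma eM_tendsto : Tendsto eM (𝓝[>] 0) atTop := by
  have h1 : Tendsto (fun m : ℝ => eK (1 - m)) (𝓝[>] 0) atTop := by
    have := eG_tendsto.add_atTop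
      ((tendsto_neg_atBot_atTop.comp Real.tendsto_log_nhdsGT_zero).atTop_div_const two_pos)
    refine this.congr' ?_
    filter_upwards [ev01] with m hm
    rw [eL_eq hm.1 hm.2]; simp; ring
  have h2 := (eK_tendsto0.inv₀ (by positivity)).const_mul (Real.pi / 2)
  refine (h1.atTop_mul_pos (C := Real.pi / 2 * (Real.pi / 2)⁻¹) (by positivity) h2).congr fun m => ?_
  unfold eM; ring

noncomputable def ePhi (m : ℝ) : ℝ := (1 / m - 1) * Real.exp (-(2 * eM m))

lemma ePhi_deriv {m : ℝ} (h0 : 0 < m) (h1 : m < 1) :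
    HasDerivAt ePhi (-(1 / m ^ 2 * (1 - (Real.pi / 2 / eK m) ^ 2) * Real.exp (-(2 * eM m)))) m := by
  have hk := eK_pos h0 h1
  have a : HasDerivAt (fun m : ℝ => 1 / m - 1) (-(1 / m ^ 2)) m := by
    have := (hasDerivAt_inv h0.ne').sub_const 1
    simpa using this
  have b := (((eM_deriv h0 h1).const_mul 2).neg).exp
  refine (a.mul b).congr_deriv ?_
  have e2 : 1 - m ≠ 0 := by linarith
  simp only [Pi.neg_apply]
  generalize Real.exp (-(2 * eM m)) = q
  field_simp
  ring

lemma ePhi_anti : StrictAntiOn ePhi (Set.Ioo 0 1) := by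
  refine strictAntiOn_of_deriv_neg (convex_Ioo 0 1)
    (fun m hm => (ePhi_deriv hm.1 hm.2).continuousAt.continuousWithinAt) fun m hm => ?_
  rw [interior_Ioo] at hm
  rw [(ePhi_deriv hm.1 hm.2).deriv]
  have h1 := eK_gt hm.1 hm.2
  have h2 := eK_pos hm.1 hm.2
  have := hm.1
  have h3 : Real.pi / 2 / eK m < 1 := by rwa [div_lt_one h2]
  have h4 : 0 < Real.pi / 2 / eK m := by positivity
  have h5 : 0 < 1 - (Real.pi / 2 / eK m) ^ 2 := by nlinarith
  rw [neg_lt_zero]; positivity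

open Topology in
lemma ePhi_tendsto : Tendsto ePhi (𝓝[>] 0) (𝓝 (1 / 16)) := by
  have h0 : Tendsto (fun m : ℝ => 1 - m) (𝓝[>] 0) (𝓝 1) := by
    have hcc : Continuous fun m : ℝ => 1 - m := by fun_prop
    have := (hcc.tendsto 0).mono_left (nhdsWithin_le_nhds (s := Set.Ioi 0))
    simpa using this
  have h1 := (diffL_tendsto (F := fun m => 2 * eK m - Real.pi) ((eK_diff0.const_mul 2).sub_const _)
    (by simp only [eK, FI_zero]; ring)).div eK_tendsto0 (by positivity)
  have h2 := h0.mul ((Real.continuous_exp.tendsto _).comp (h1.sub (eG_tendsto.const_mul 2)))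
  have h3 : 1 * Real.exp (0 / (Real.pi / 2) - 2 * (2 * Real.log 2)) = 1 / 16 := by
    rw [zero_div, zero_sub, one_mul, show 2 * (2 * Real.log 2) = Real.log 16 by
      rw [show (16:ℝ) = 2 ^ 4 by norm_num, Real.log_pow]; push_cast; ring, Real.exp_neg,
      Real.exp_log (by norm_num)]
    norm_num
  rw [h3] at h2
  refine h2.congr' ?_
  filter_upwards [ev01] with m hm
  have hk := eK_pos hm.1 hm.2
  have hl := eL_eq hm.1 hm.2
  have := hm.1
  simp only [Function.comp, Pi.div_apply]
  unfold ePhi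
  have e : (1 / m - 1) = (1 - m) * Real.exp (-Real.log m) := by
    rw [Real.exp_neg, Real.exp_log hm.1]; field_simp
  rw [e, mul_assoc, ← Real.exp_add]
  congr 2
  unfold eM
  have : eR (Real.sqrt (1 - m)) + Real.log (1 + Real.sqrt (1 - m)) = eK (1 - m) + Real.log m / 2 := by
    linarith
  rw [this]
  field_simp
  ring

lemma ePhi_lt {m : ℝ} (h0 : 0 < m) (h1 : m < 1) : ePhi m < 1 / 16 := by
  have hm : m / 2 ∈ Set.Ioo (0:ℝ) 1 := ⟨by linarith, by linarith⟩
  have h2 : ePhi m < ePhi (m / 2) := ePhi_anti hm ⟨h0, h1⟩ (by linarith)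
  refine h2.trans_le (ge_of_tendsto ePhi_tendsto ?_)
  filter_upwards [Ioo_mem_nhdsGT hm.1] with x hx
  exact (ePhi_anti ⟨hx.1, hx.2.trans hm.2⟩ hm hx.2).le

lemma mu_eq {u : ℝ} (h0 : 0 ≤ u) (h1 : u ≤ 1) : mu u = eM (u ^ 2) := by
  have : Real.sqrt (1 - u ^ 2) ^ 2 = 1 - u ^ 2 := Real.sq_sqrt (by nlinarith)
  unfold mu eM ellK eK FI
  rw [this]

/-- Intermediate values near `0`. -/
lemma ivt_near {F : ℝ → ℝ} {m₀ y : ℝ} (h0 : 0 < m₀) (h1 : m₀ < 1)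
    (hc : ∀ m, 0 < m → m < 1 → ContinuousAt F m) (hy : F m₀ ≤ y)
    (hev : ∀ᶠ m in nhdsWithin 0 (Set.Ioi 0), y < F m) :
    ∃ m, 0 < m ∧ m ≤ m₀ ∧ F m = y := by
  obtain ⟨a, ha, ha'⟩ := (hev.and (Ioo_mem_nhdsGT h0)).exists
  have := intermediate_value_Icc' ha'.2.le (f := F)
    (fun m hm => (hc m (ha'.1.trans_le hm.1) (hm.2.trans_lt h1)).continuousWithinAt)
  obtain ⟨m, hm, hm'⟩ := this ⟨hy, ha.le⟩
  exact ⟨m, ha'.1.trans_le hm.1, hm.2, hm'⟩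

theorem stmt_10 (eta : ℝ → ℝ → ℝ)
    (heta : ∀ K t : ℝ, 0 < K → 0 < t → ∀ u ∈ Set.Ioo (0:ℝ) 1,
      mu u = K * mu (1 / Real.sqrt (1 + t)) → eta K t = 1 / u ^ 2 - 1) (t : ℝ) (ht : 0 < t) (f : ℝ → ℝ)
    (hf : f = fun K : ℝ => eta K t * Real.exp (-(2 * K * mu (1 / Real.sqrt (1 + t))))) :
    StrictMonoOn f (Set.Ici 1) ∧
    f 1 = t * Real.exp (-(2 * mu (1 / Real.sqrt (1 + t)))) ∧
    (∀ K : ℝ, 1 ≤ K → f K < 1 / 16) ∧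
    Filter.Tendsto f Filter.atTop (nhds (1 / 16)) ∧
    f '' Set.Ici 1 = Set.Ico (t * Real.exp (-(2 * mu (1 / Real.sqrt (1 + t))))) (1 / 16) := by
  set m₀ : ℝ := 1 / (1 + t) with hm₀
  have h0 : 0 < m₀ := by positivity
  have h1 : m₀ < 1 := by rw [hm₀, div_lt_one (by positivity)]; linarith
  have hmu : mu (1 / Real.sqrt (1 + t)) = eM m₀ := by
    have h : 1 ≤ Real.sqrt (1 + t) := by rw [Real.one_le_sqrt]; linarith
    rw [mu_eq (by positivity) (by rw [div_le_one (by positivity)]; exact h), div_pow,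
      Real.sq_sqrt (by positivity), one_pow]
  rw [hmu] at hf ⊢
  replace heta := fun K hK => heta K t hK ht
  simp only [hmu] at heta
  have hMp := eM_pos h0 h1
  -- key formula
  have key : ∀ K m, 0 < K → 0 < m → m < 1 → eM m = K * eM m₀ → f K = ePhi m := by
    intro K m hK hm hm1 he
    have hu : Real.sqrt m ^ 2 = m := Real.sq_sqrt hm.le
    have hu1 : Real.sqrt m < 1 := by rw [Real.sqrt_lt' one_pos]; linarith
    have := heta K hK (Real.sqrt m) ⟨Real.sqrt_pos.2 hm, hu1⟩
      (by rw [mu_eq (Real.sqrt_nonneg _) hu1.le, hu, he])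
    rw [hf]
    simp only
    rw [this, hu, ePhi, he, mul_assoc]
  have hex : ∀ K, 1 ≤ K → ∃ m, 0 < m ∧ m ≤ m₀ ∧ eM m = K * eM m₀ := fun K hK =>
    ivt_near h0 h1 (fun m a b => (eM_deriv a b).continuousAt) (by nlinarith)
      (eM_tendsto.eventually_gt_atTop _)
  have hf1 : f 1 = ePhi m₀ := key 1 m₀ one_pos h0 h1 (by ring)
  have hphi : ePhi m₀ = t * Real.exp (-(2 * eM m₀)) := by
    unfold ePhi
    congr 1
    rw [hm₀]; field_simp; ring
  have hmono : StrictMonoOn f (Set.Ici 1) := by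
    intro K₁ hK₁ K₂ hK₂ hlt
    simp only [Set.mem_Ici] at hK₁ hK₂
    obtain ⟨a, ha, ha1, hae⟩ := hex K₁ hK₁
    obtain ⟨b, hb, hb1, hbe⟩ := hex K₂ hK₂
    have ha2 := ha1.trans_lt h1
    have hb2 := hb1.trans_lt h1
    rw [key K₁ a (by linarith) ha ha2 hae, key K₂ b (by linarith) hb hb2 hbe]
    refine ePhi_anti ⟨hb, hb2⟩ ⟨ha, ha2⟩ ?_
    rw [← eM_anti.lt_iff_gt ⟨ha, ha2⟩ ⟨hb, hb2⟩, hae, hbe]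
    exact mul_lt_mul_of_pos_right hlt hMp
  have hlt : ∀ K : ℝ, 1 ≤ K → f K < 1 / 16 := by
    intro K hK
    obtain ⟨a, ha, ha1, hae⟩ := hex K hK
    rw [key K a (by linarith) ha (ha1.trans_lt h1) hae]
    exact ePhi_lt ha (ha1.trans_lt h1)
  have hsurj : ∀ y, ePhi m₀ ≤ y → y < 1 / 16 → ∃ K, 1 ≤ K ∧ f K = y := by
    intro y hy hy1
    obtain ⟨m, hm, hm1, he⟩ := ivt_near (F := ePhi) h0 h1
      (fun m a b => (ePhi_deriv a b).continuousAt) hy (ePhi_tendsto.eventually (lt_mem_nhds hy1))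
    have hK : 1 ≤ eM m / eM m₀ := by
      rw [one_le_div hMp]
      exact eM_anti.antitoneOn ⟨hm, hm1.trans_lt h1⟩ ⟨h0, h1⟩ hm1
    refine ⟨eM m / eM m₀, hK, ?_⟩
    rw [key _ m (by linarith) hm (hm1.trans_lt h1) (by field_simp), he]
  refine ⟨hmono, by rw [hf1, hphi], hlt, ?_, ?_⟩
  · rw [tendsto_order]
    refine ⟨fun y hy => ?_, fun y hy => ?_⟩
    · obtain ⟨K, hK, hKe⟩ := hsurj (max (ePhi m₀) ((y + 1/16) / 2)) (le_max_left _ _)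
        (max_lt (ePhi_lt h0 h1) (by linarith))
      filter_upwards [eventually_ge_atTop K] with x hx
      have a1 := hmono.monotoneOn hK (hK.trans hx) hx
      have a2 := le_max_right (ePhi m₀) ((y + 1/16) / 2)
      linarith
    · filter_upwards [eventually_ge_atTop 1] with x hx
      exact (hlt x hx).trans hy
  · rw [← hphi]
    ext y
    constructor
    · rintro ⟨K, hK, rfl⟩
      refine ⟨?_, hlt K hK⟩
      rw [← hf1]
      exact hmono.monotoneOn (Set.mem_Ici.2 le_rfl) hK hK
    · rintro ⟨a, b⟩
      exact hsurj y a b
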